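/- Let φ be an f-compatible map (positive linear, φ(e) = f) for an effect f in an AOU space. Then φ is coherent (φ(g) = g for all 0 ≤ g ≤ f) if and only if φ ∘ ψ = ψ for every f-compatible map ψ of the form ψ = Σᵢ hᵢ·ωᵢ with hᵢ ∈ V⁺, ωᵢ states, and ψ(e) = f. -/

import Mathlib

/-- An Archimedean order unit (AOU) space structure on a real vector space `V`:
a cone `pos`, an order unit `e`, and the Archimedean property. -/
structure AOU (V : Type*) [AddCommGroup V] [Module ℝ V] where
  pos : Set V
  e : V
  add_mem : ∀ {x y : V}, x ∈ pos → y ∈ pos → x + y ∈ pos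
  smul_mem : ∀ {r : ℝ}, 0 ≤ r → ∀ {x : V}, x ∈ pos → r • x ∈ pos
  pointed : ∀ {x : V}, x ∈ pos → -x ∈ pos → x = 0
  e_mem : e ∈ pos
  order_unit : ∀ x : V, ∃ r : ℝ, 0 ≤ r ∧ r • e + x ∈ pos
  arch : ∀ x : V, (∀ r : ℝ, 0 < r → x + r • e ∈ pos) → x ∈ pos

namespace AOU

variable {V : Type*} [AddCommGroup V] [Module ℝ V] (A : AOU V)

/-- The partial order induced by the cone: `x ≤ y` iff `y - x ∈ pos`. -/
def Le (x y : V) : Prop := y - x ∈ A.pos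

/-- The order norm `‖x‖ = inf {r ≥ 0 : -r e ≤ x ≤ r e}`. -/
noncomputable def onorm (x : V) : ℝ :=
  sInf {r : ℝ | 0 ≤ r ∧ A.Le (-(r • A.e)) x ∧ A.Le x (r • A.e)}

/-- A state is a linear functional with `ω e = 1` that is nonnegative on the cone. -/
def IsState (ω : V →ₗ[ℝ] ℝ) : Prop := ω A.e = 1 ∧ ∀ x ∈ A.pos, 0 ≤ ω x

/-- An effect is an element `f` with `0 ≤ f ≤ e`. -/
def IsEffect (f : V) : Prop := f ∈ A.pos ∧ A.Le f A.e

/-- A positive map sends the cone into itself. -/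
def IsPosMap (φ : V →ₗ[ℝ] V) : Prop := ∀ x ∈ A.pos, φ x ∈ A.pos

/-- A coherent `f`-compatible map (coherent Lüders rule): positive, `φ e = f`,
and `φ g = g` whenever `0 ≤ g ≤ f`. -/
def IsCLR (f : V) (φ : V →ₗ[ℝ] V) : Prop :=
  A.IsPosMap φ ∧ φ A.e = f ∧ ∀ g ∈ A.pos, A.Le g f → φ g = g

end AOU

theorem sum_sub_apply_mem {M ι : Type*} [AddCommGroup M] (C : AddSubmonoid M) {s : Finset ι}
    {h : ι → M} (hh : ∀ j ∈ s, h j ∈ C) {i : ι} (hi : i ∈ s) : ∑ j ∈ s, h j - h i ∈ C := by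
  classical
  rw [← Finset.sum_erase_eq_sub hi]
  exact C.sum_mem fun j hj => hh j (Finset.mem_of_mem_erase hj)

section Module

variable {R V : Type*} [Ring R] [AddCommGroup V] [Module R V]

theorem eq_zero_of_forall_smul_add_smul_eq_zero [IsDomain R] [Module.IsTorsionFree R V]
    {X : Type*} {ω σ : X → R} (hne : ω ≠ σ) {e : X} (hω : ω e = 1) (hσ : σ e = 1) {a b : V}
    (h : ∀ x, ω x • a + σ x • b = 0) : b = 0 := by
  obtain ⟨x, hx⟩ := Function.ne_iff.1 hne
  have hab : a + b = 0 := by simpa only [hω, hσ, one_smul] using h e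
  obtain rfl : a = -b := eq_neg_of_add_eq_zero_left hab
  -- With `a = -b`, a point separating `ω` from `σ` isolates a nonzero multiple of `b`.
  have hsmul : (σ x - ω x) • b = 0 := by rw [sub_smul, sub_eq_neg_add, ← smul_neg, h x]
  exact (smul_eq_zero.1 hsmul).resolve_left (sub_ne_zero.2 hx.symm)

theorem map_sum_smul_eq_of_coherent {ι : Type*} [Fintype ι] (C : AddSubmonoid V) {f : V}
    {φ : V →ₗ[R] V} (hcoh : ∀ g ∈ C, f - g ∈ C → φ g = g)
    {h : ι → V} (hh : ∀ i, h i ∈ C) (hf : ∑ i, h i = f) (c : ι → R) :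
    φ (∑ i, c i • h i) = ∑ i, c i • h i := by
  have hfix (i : ι) : φ (h i) = h i :=
    hcoh (h i) (hh i) (hf ▸ sum_sub_apply_mem C (fun j _ => hh j) (Finset.mem_univ i))
  simp only [map_sum, map_smul, hfix]

theorem map_eq_self_of_absorbs [IsDomain R] [Module.IsTorsionFree R V]
    {X : Type*} {ω σ : X → R} (hne : ω ≠ σ) {e : X} (hω : ω e = 1) (hσ : σ e = 1)
    {φ : V →ₗ[R] V} {h g : V}
    (habs : ∀ x, φ (ω x • h + σ x • g) = ω x • h + σ x • g) : φ g = g := by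
  refine sub_eq_zero.1 <| eq_zero_of_forall_smul_add_smul_eq_zero (a := φ h - h) hne hω hσ
    fun x => ?_
  rw [smul_sub, smul_sub, sub_add_sub_comm, ← map_smul, ← map_smul, ← map_add, habs x, sub_self]

theorem aou_coherent_iff_absorbs_general [IsDomain R] [Module.IsTorsionFree R V]
    (C : AddSubmonoid V) {e : V} {S : Set (V →ₗ[R] R)} (hS : S.Nontrivial)
    (hSe : ∀ ω ∈ S, ω e = 1) (f : V) (φ : V →ₗ[R] V) :
    (∀ g ∈ C, f - g ∈ C → φ g = g) ↔
      ∀ (n : ℕ) (h : Fin n → V) (ω : Fin n → (V →ₗ[R] R)),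
        (∀ i, h i ∈ C) → (∀ i, ω i ∈ S) → ∑ i, ω i e • h i = f →
        ∀ x : V, φ (∑ i, ω i x • h i) = ∑ i, ω i x • h i := by
  constructor
  · intro hcoh n h ω hh hω hf x
    refine map_sum_smul_eq_of_coherent C hcoh hh ?_ fun i => ω i x
    simpa only [hSe _ (hω _), one_smul] using hf
  · intro habs g hg hgf
    obtain ⟨ω, hω, σ, hσ, hne⟩ := hS
    refine map_eq_self_of_absorbs (DFunLike.coe_injective.ne hne) (hSe ω hω) (hSe σ hσ)
      (h := f - g) fun x => ?_
    -- The test map `ψ = (f - g)·ω + g·σ` satisfies `ψ e = f`.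
    have htest := habs 2 ![f - g, g] ![ω, σ] (by simp [Fin.forall_fin_two, hg, hgf])
      (by simp [Fin.forall_fin_two, hω, hσ]) (by simp [hSe, hω, hσ]) x
    simpa only [Fin.sum_univ_two, Matrix.cons_val_zero, Matrix.cons_val_one] using htest

end Module

/-- The positive cone of an AOU space, as an additive submonoid. -/
def AOU.posSubmonoid {V : Type*} [AddCommGroup V] [Module ℝ V] (A : AOU V) : AddSubmonoid V where
  carrier := A.pos
  add_mem' := A.add_mem
  zero_mem' := by simpa only [zero_smul] using A.smul_mem le_rfl A.e_mem

theorem aou_coherent_iff_absorbs {V : Type*} [AddCommGroup V] [Module ℝ V]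
    (A : AOU V)
    (hS : ∃ ω σ : V →ₗ[ℝ] ℝ, A.IsState ω ∧ A.IsState σ ∧ ω ≠ σ)
    (f : V) (hf : A.IsEffect f)
    (φ : V →ₗ[ℝ] V) (hφ : A.IsPosMap φ) (hφe : φ A.e = f) :
    (∀ g ∈ A.pos, A.Le g f → φ g = g) ↔
      (∀ (n : ℕ) (h : Fin n → V) (ω : Fin n → (V →ₗ[ℝ] ℝ)),
        (∀ i, h i ∈ A.pos) → (∀ i, A.IsState (ω i)) →
        (∑ i, ω i A.e • h i) = f →
        ∀ x : V, φ (∑ i, ω i x • h i) = ∑ i, ω i x • h i) := by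
  obtain ⟨ω, σ, hω, hσ, hne⟩ := hS
  exact aou_coherent_iff_absorbs_general A.posSubmonoid (S := {ω | A.IsState ω})
    ⟨ω, hω, σ, hσ, hne⟩ (fun _ hτ => hτ.1) f φ
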